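/- Let w be a partial permutation and C a channel of w that is not the northeast channel of its river. Then there exists a stream contained in the partial permutation pr_C(w) of density strictly greater than the density of C. Consequently pr_C(w) does not lie in the same two-sided cell as w. -/

import Mathlib

/-- A stream (for period `n`). -/
def IsStream (n : ℕ) (S : Set (ℤ × ℤ)) : Prop :=
  (∀ b : ℤ × ℤ, b ∈ S ↔ (b.1 + n, b.2 + n) ∈ S) ∧
  (∀ b b' : ℤ × ℤ, b ∈ S → b' ∈ S → b.1 < b'.1 → b.2 < b'.2) ∧
  (∀ b b' : ℤ × ℤ, b ∈ S → b' ∈ S → b.1 = b'.1 → b = b')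

/-- The density of a stream. -/
noncomputable def streamDensity (n : ℕ) (S : Set (ℤ × ℤ)) : ℕ :=
  Set.ncard {x : ℤ | 1 ≤ x ∧ x ≤ n ∧ ∃ y : ℤ, (x, y) ∈ S}

/-- The graph of a partial permutation (period `n`). -/
def IsPartialPerm (n : ℕ) (W : Set (ℤ × ℤ)) : Prop :=
  (∀ b : ℤ × ℤ, b ∈ W ↔ (b.1 + n, b.2 + n) ∈ W) ∧
  (∀ b b' : ℤ × ℤ, b ∈ W → b' ∈ W → b.1 = b'.1 → b = b') ∧
  (∀ b b' : ℤ × ℤ, b ∈ W → b' ∈ W → b.2 = b'.2 → b = b')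

/-- A channel of `W`: a stream contained in `W` of maximal density. -/
def IsChannel (n : ℕ) (W C : Set (ℤ × ℤ)) : Prop :=
  IsStream n C ∧ C ⊆ W ∧
  ∀ S : Set (ℤ × ℤ), IsStream n S → S ⊆ W → streamDensity n S ≤ streamDensity n C

/-- A path in `W` of length `k`. -/
def IsPath (W : Set (ℤ × ℤ)) (k : ℕ) (p : ℕ → ℤ × ℤ) : Prop :=
  (∀ i : ℕ, i ≤ k → p i ∈ W) ∧
  (∀ i : ℕ, i < k → (p i).1 < (p (i + 1)).1 ∧ (p i).2 < (p (i + 1)).2)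

/-- A channel numbering `d^C` of `W` relative to the channel `C`. -/
def IsChannelNumbering (n : ℕ) (W C : Set (ℤ × ℤ)) (d : ℤ × ℤ → ℤ) : Prop :=
  (∀ b b' : ℤ × ℤ, b ∈ C → b' ∈ C → b.1 < b'.1 → d b < d b') ∧
  (∀ b : ℤ × ℤ, b ∈ C → d (b.1 + n, b.2 + n) = d b + (streamDensity n C : ℤ)) ∧
  (∀ b ∈ W,
    IsGreatest
      {m : ℤ | ∃ (k : ℕ) (p : ℕ → ℤ × ℤ),
        IsPath W k p ∧ p 0 ∈ C ∧ p k = b ∧ m = d (p 0) + (k : ℤ)}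
      (d b))

/-- `C ≤_SW C'`: every ball of `C` is weakly southwest of some ball of `C'`. -/
def SWle (C C' : Set (ℤ × ℤ)) : Prop :=
  ∀ b ∈ C, ∃ b' ∈ C', b'.1 ≤ b.1 ∧ b.2 ≤ b'.2

/-- The partial rotation of `W` along the stream `C`: each ball of `C` gets the
`y`-coordinate of its successor in `C`; balls off `C` are unchanged. -/
def partialRotation (W C : Set (ℤ × ℤ)) : Set (ℤ × ℤ) :=
  (W \ C) ∪
    {p : ℤ × ℤ | ∃ b ∈ C, ∃ b' ∈ C, b.1 < b'.1 ∧
      (∀ c ∈ C, c.1 ≤ b.1 ∨ b'.1 ≤ c.1) ∧ p = (b.1, b'.2)}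

/-- The periodShift of a ball by `t` periods. -/
def periodShift (n : ℕ) (t : ℤ) (b : ℤ × ℤ) : ℤ × ℤ := (b.1 + t * n, b.2 + t * n)

@[simp] lemma periodShift_fst (n : ℕ) (t : ℤ) (b : ℤ × ℤ) :
    (periodShift n t b).1 = b.1 + t * n := rfl

@[simp] lemma periodShift_snd (n : ℕ) (t : ℤ) (b : ℤ × ℤ) :
    (periodShift n t b).2 = b.2 + t * n := rfl

lemma periodShift_zero (n : ℕ) (b : ℤ × ℤ) : periodShift n 0 b = b := by
  ext <;> simp

lemma periodShift_periodShift (n : ℕ) (s t : ℤ) (b : ℤ × ℤ) :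
    periodShift n s (periodShift n t b) = periodShift n (t + s) b := by
  ext <;> simp <;> ring

lemma periodShift_one_add (n : ℕ) (t : ℤ) (b : ℤ × ℤ) :
    periodShift n (t + 1) b = ((periodShift n t b).1 + n, (periodShift n t b).2 + n) := by
  ext <;> simp <;> ring

lemma periodShift_mem_iff {n : ℕ} {S : Set (ℤ × ℤ)}
    (h : ∀ b : ℤ × ℤ, b ∈ S ↔ (b.1 + n, b.2 + n) ∈ S) (t : ℤ) (b : ℤ × ℤ) :
    periodShift n t b ∈ S ↔ b ∈ S := by
  induction t using Int.induction_on with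
  | zero => rw [periodShift_zero]
  | succ i ih => rw [periodShift_one_add, ← h, ih]
  | pred i ih =>
    rw [h, ← periodShift_one_add, sub_add_cancel, ih]

/-- A strictly increasing sequence of integers gaining `n` every `R` steps meets `[1, n]` in
exactly `R` values. -/
lemma ncard_range_window {n R : ℕ} {f : ℤ → ℤ} (hf : StrictMono f)
    (hper : ∀ u, f (u + R) = f u + n) :
    Set.ncard {x : ℤ | 1 ≤ x ∧ x ≤ n ∧ ∃ u, f u = x} = R := by
  have hup : ∀ k : ℕ, f 0 + k ≤ f k := by
    intro k
    induction k with
    | zero => simp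
    | succ k ih =>
      have := hf (show (k : ℤ) < (k : ℤ) + 1 by omega)
      push_cast
      omega
  have hdown : ∀ k : ℕ, f (-k) ≤ f 0 - k := by
    intro k
    induction k with
    | zero => simp
    | succ k ih =>
      have := hf (show -((k : ℤ) + 1) < -(k : ℤ) by omega)
      push_cast
      omega
  obtain ⟨u₀, h₀, hleast⟩ := Int.exists_least_of_bdd (P := fun u => 1 ≤ f u)
    ⟨-(f 0).natAbs, fun u hu => by
      by_contra hlt
      have h1 := hf (not_le.mp hlt)
      have h2 := hdown (f 0).natAbs
      omega⟩
    ⟨((f 0).natAbs + 1 : ℕ), by have := hup ((f 0).natAbs + 1); omega⟩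
  have hpred : f (u₀ - 1) ≤ 0 := by
    by_contra hlt
    have := hleast (u₀ - 1) (by omega)
    omega
  have hset : {x : ℤ | 1 ≤ x ∧ x ≤ n ∧ ∃ u, f u = x} = f '' (Finset.Ico u₀ (u₀ + R) : Set ℤ) := by
    ext x
    simp only [Set.mem_ofPred_eq, Set.mem_image, Finset.coe_Ico, Set.mem_Ico]
    constructor
    · rintro ⟨h1, h2, u, rfl⟩
      refine ⟨u, ⟨hleast u h1, ?_⟩, rfl⟩
      by_contra hlt
      have := hf.monotone (not_lt.mp hlt)
      rw [hper] at this
      omega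
    · rintro ⟨u, ⟨h1, h2⟩, rfl⟩
      refine ⟨h₀.trans (hf.monotone h1), ?_, u, rfl⟩
      have := hf.monotone (show u ≤ u₀ - 1 + R by omega)
      rw [hper] at this
      omega
  rw [hset, Set.ncard_image_of_injective _ hf.injective, Set.ncard_coe_finset, Int.card_Ico]
  omega

/-- A finite chain `y 0 < ⋯ < y (R - 1) < y 0 + (n, n)` generates a stream of density `R`. -/
lemma exists_stream_of_chain {n R : ℕ} (hR : 0 < R) {y : ℤ → ℤ × ℤ}
    (hy : ∀ v : ℤ, 0 ≤ v → v + 1 < R → (y v).1 < (y (v + 1)).1 ∧ (y v).2 < (y (v + 1)).2)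
    (hlast : (y (R - 1)).1 < (y 0).1 + n ∧ (y (R - 1)).2 < (y 0).2 + n) :
    ∃ S : Set (ℤ × ℤ), IsStream n S ∧ streamDensity n S = R ∧
      ∀ b ∈ S, ∃ v t : ℤ, 0 ≤ v ∧ v < R ∧ b = periodShift n t (y v) := by
  set s : ℤ → ℤ × ℤ := fun u => periodShift n (u / R) (y (u % R)) with hs
  have hR' : (0 : ℤ) < R := by exact_mod_cast hR
  have hper : ∀ u, s (u + R) = ((s u).1 + n, (s u).2 + n) := by
    intro u
    simp only [hs]
    rw [Int.add_emod_right, Int.add_ediv_of_dvd_right (dvd_refl _), Int.ediv_self hR'.ne',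
      periodShift_one_add]
  have hstep : ∀ u, (s u).1 < (s (u + 1)).1 ∧ (s u).2 < (s (u + 1)).2 := by
    intro u
    have h0 := Int.emod_nonneg u hR'.ne'
    have h1 := Int.emod_lt_of_pos u hR'
    have h2 := Int.emod_add_mul_ediv u R
    by_cases hv : u % R + 1 < R
    · have hd : (u + 1) / (R : ℤ) = u / R := by
        rw [Int.ediv_eq_iff_of_pos hR']
        constructor <;> nlinarith
      have hm : (u + 1) % (R : ℤ) = u % R + 1 := by
        have := Int.emod_add_mul_ediv (u + 1) R
        rw [hd] at this
        linarith
      have := hy _ h0 hv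
      simp only [hs, hd, hm, periodShift_fst, periodShift_snd]
      constructor <;> linarith
    · have hv' : u % R = R - 1 := by omega
      have hd : (u + 1) / (R : ℤ) = u / R + 1 := by
        rw [Int.ediv_eq_iff_of_pos hR']
        constructor <;> nlinarith
      have hm : (u + 1) % (R : ℤ) = 0 := by
        have := Int.emod_add_mul_ediv (u + 1) R
        rw [hd] at this
        linarith
      simp only [hs, hd, hm, hv', periodShift_fst, periodShift_snd]
      constructor <;> linarith
  have hf : StrictMono fun u => (s u).1 := strictMono_int_of_lt_succ fun u => (hstep u).1
  have hg : StrictMono fun u => (s u).2 := strictMono_int_of_lt_succ fun u => (hstep u).2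
  refine ⟨Set.range s, ⟨?_, ?_, ?_⟩, ?_, ?_⟩
  · intro b
    constructor
    · rintro ⟨u, rfl⟩
      exact ⟨u + R, hper u⟩
    · rintro ⟨u, hu⟩
      refine ⟨u - R, ?_⟩
      have := hper (u - R)
      rw [sub_add_cancel, hu, Prod.mk.injEq] at this
      ext <;> linarith [this.1, this.2]
  · rintro _ _ ⟨u, rfl⟩ ⟨v, rfl⟩ h
    exact hg (hf.lt_iff_lt.mp h)
  · rintro _ _ ⟨u, rfl⟩ ⟨v, rfl⟩ h
    rw [hf.injective h]
  · have := ncard_range_window (n := n) (R := R) hf fun u => by simp only [hper]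
    rw [← this, streamDensity]
    congr 1
    ext x
    simp only [Set.mem_ofPred_eq, Set.mem_range, Prod.ext_iff]
    constructor
    · rintro ⟨h1, h2, y, u, h, -⟩
      exact ⟨h1, h2, u, h⟩
    · rintro ⟨h1, h2, u, h⟩
      exact ⟨h1, h2, (s u).2, u, h, rfl⟩
  · rintro _ ⟨u, rfl⟩
    exact ⟨u % R, u / R, Int.emod_nonneg u hR'.ne', Int.emod_lt_of_pos u hR', rfl⟩

/-- `c` lists the balls of the stream `C` by their `d`-values, which advance by `r` per period. -/
structure Enumerates (n r : ℕ) (C : Set (ℤ × ℤ)) (d : ℤ × ℤ → ℤ) (c : ℤ → ℤ × ℤ) : Prop where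
  mem : ∀ m, c m ∈ C
  level : ∀ m, d (c m) = m
  eq_of_mem : ∀ b ∈ C, c (d b) = b
  lt : ∀ m l, m < l → (c m).1 < (c l).1 ∧ (c m).2 < (c l).2
  shift : ∀ t m, periodShift n t (c m) = c (m + t * r)

namespace IsChannelNumbering

variable {n : ℕ} {W C : Set (ℤ × ℤ)} {d : ℤ × ℤ → ℤ}

lemma periodShift_of_mem (hC : IsStream n C) (hd : IsChannelNumbering n W C d) {b : ℤ × ℤ}
    (hb : b ∈ C) (t : ℤ) : d (periodShift n t b) = d b + t * streamDensity n C := by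
  induction t using Int.induction_on with
  | zero => simp [periodShift_zero]
  | succ i ih =>
    rw [periodShift_one_add, hd.2.1 _ ((periodShift_mem_iff hC.1 _ _).2 hb), ih]
    ring
  | pred i ih =>
    have := hd.2.1 _ ((periodShift_mem_iff hC.1 (-(i : ℤ) - 1) _).2 hb)
    rw [← periodShift_one_add, sub_add_cancel, ih] at this
    linarith

lemma injOn (hC : IsStream n C) (hd : IsChannelNumbering n W C d) : Set.InjOn d C := by
  intro b hb b' hb' h
  rcases lt_trichotomy b.1 b'.1 with h1 | h1 | h1
  · exact absurd h (hd.1 _ _ hb hb' h1).ne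
  · exact hC.2.2 _ _ hb hb' h1
  · exact absurd h (hd.1 _ _ hb' hb h1).ne'

lemma exists_mem_eq (hC : IsStream n C) (hd : IsChannelNumbering n W C d)
    (hr : 0 < streamDensity n C) (m : ℤ) : ∃ b ∈ C, d b = m := by
  set r := streamDensity n C
  have hr' : (0 : ℤ) < r := by exact_mod_cast hr
  set X := {x : ℤ | 1 ≤ x ∧ x ≤ n ∧ ∃ y : ℤ, (x, y) ∈ C}
  have hball : ∀ x : ℤ, ∃ y : ℤ, x ∈ X → (x, y) ∈ C := by
    intro x
    by_cases hx : x ∈ X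
    · obtain ⟨y, hy⟩ := hx.2.2
      exact ⟨y, fun _ => hy⟩
    · exact ⟨0, fun h => absurd h hx⟩
  choose y hy using hball
  have hinj : Set.InjOn (fun x => d (x, y x) % r) X := by
    intro x hx x' hx' h
    have hmul : d (x, y x) = d (x', y x') + (d (x, y x) / r - d (x', y x') / r) * r := by
      have h1 := Int.emod_add_mul_ediv (d (x, y x)) r
      have h2 := Int.emod_add_mul_ediv (d (x', y x')) r
      simp only at h
      linarith
    set t := d (x, y x) / r - d (x', y x') / r
    rw [← periodShift_of_mem hC hd (hy _ hx')] at hmul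
    have heq := injOn hC hd (hy _ hx) ((periodShift_mem_iff hC.1 _ _).2 (hy _ hx')) hmul
    have h1 : x = x' + t * n := congrArg Prod.fst heq
    have hlo := hx.1
    have hhi := hx.2.1
    have hlo' := hx'.1
    have hhi' := hx'.2.1
    have ht : t = 0 := by
      have h2 : t < 1 := by
        by_contra hge
        nlinarith [not_lt.mp hge]
      have h3 : -1 < t := by
        by_contra hge
        nlinarith [not_lt.mp hge]
      omega
    simpa [ht] using h1
  have himage : (fun x => d (x, y x) % r) '' X = (Finset.Ico (0 : ℤ) r : Set ℤ) := by
    apply Set.eq_of_subset_of_ncard_le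
    · rintro _ ⟨x, -, rfl⟩
      simp only [Finset.coe_Ico, Set.mem_Ico]
      exact ⟨Int.emod_nonneg _ hr'.ne', Int.emod_lt_of_pos _ hr'⟩
    · rw [hinj.ncard_image, Set.ncard_coe_finset, Int.card_Ico]
      change _ ≤ streamDensity n C
      omega
    · exact Finset.finite_toSet _
  have hmem : m % r ∈ (fun x => d (x, y x) % r) '' X := by
    rw [himage, Finset.coe_Ico, Set.mem_Ico]
    exact ⟨Int.emod_nonneg _ hr'.ne', Int.emod_lt_of_pos _ hr'⟩
  obtain ⟨x, hx, h⟩ := hmem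
  refine ⟨periodShift n (m / r - d (x, y x) / r) (x, y x),
    (periodShift_mem_iff hC.1 _ _).2 (hy _ hx), ?_⟩
  rw [periodShift_of_mem hC hd (hy _ hx)]
  have h1 := Int.emod_add_mul_ediv (d (x, y x)) r
  have h2 := Int.emod_add_mul_ediv m r
  simp only at h
  linarith

lemma exists_enumerates (hC : IsStream n C) (hd : IsChannelNumbering n W C d)
    (hr : 0 < streamDensity n C) : ∃ c, Enumerates n (streamDensity n C) C d c := by
  choose c hc hcd using exists_mem_eq hC hd hr
  refine ⟨c, hc, hcd, fun b hb => injOn hC hd (hc _) hb (hcd _), ?_, ?_⟩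
  · intro m l hml
    suffices h : (c m).1 < (c l).1 from ⟨h, hC.2.1 _ _ (hc m) (hc l) h⟩
    rcases lt_trichotomy (c m).1 (c l).1 with h | h | h
    · exact h
    · have := congrArg d (hC.2.2 _ _ (hc m) (hc l) h)
      rw [hcd, hcd] at this
      omega
    · have := hd.1 _ _ (hc l) (hc m) h
      rw [hcd, hcd] at this
      omega
  · intro t m
    apply injOn hC hd ((periodShift_mem_iff hC.1 _ _).2 (hc m)) (hc _)
    rw [periodShift_of_mem hC hd (hc m), hcd, hcd]

lemma lt_of_lt (hd : IsChannelNumbering n W C d) {b b' : ℤ × ℤ} (hb : b ∈ W) (hb' : b' ∈ W)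
    (h1 : b.1 < b'.1) (h2 : b.2 < b'.2) : d b < d b' := by
  obtain ⟨k, p, hp, h0, hk, hm⟩ := (hd.2.2 b hb).1
  have : d (p 0) + ((k + 1 : ℕ) : ℤ) ≤ d b' := by
    refine (hd.2.2 b' hb').2
      ⟨k + 1, fun i => if i ≤ k then p i else b', ⟨?_, ?_⟩, ?_, ?_, ?_⟩
    · intro i _
      dsimp only
      split_ifs with h
      · exact hp.1 i h
      · exact hb'
    · intro i hi
      dsimp only
      rcases (Nat.lt_succ_iff.mp hi).lt_or_eq with h | rfl
      · rw [if_pos h.le, if_pos (by omega)]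
        exact hp.2 i h
      · rw [if_pos le_rfl, if_neg (by omega), hk]
        exact ⟨h1, h2⟩
    · simpa using h0
    · simp
    · simp
  push_cast at this
  omega

lemma add_le_of_isPath (hd : IsChannelNumbering n W C d) {k : ℕ} {p : ℕ → ℤ × ℤ}
    (hp : IsPath W k p) {i : ℕ} (hi : i ≤ k) : d (p 0) + i ≤ d (p i) := by
  induction i with
  | zero => simp
  | succ i ih =>
    have h := hp.2 i (by omega)
    have := lt_of_lt hd (hp.1 i (by omega)) (hp.1 (i + 1) hi) h.1 h.2
    have := ih (by omega)
    push_cast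
    omega

lemma le_periodShift (hW : IsPartialPerm n W) (hC : IsStream n C)
    (hd : IsChannelNumbering n W C d) {b : ℤ × ℤ} (hb : b ∈ W) (t : ℤ) :
    d b + t * streamDensity n C ≤ d (periodShift n t b) := by
  obtain ⟨k, p, hp, h0, hk, hm⟩ := (hd.2.2 b hb).1
  refine (hd.2.2 _ ((periodShift_mem_iff hW.1 t b).2 hb)).2
    ⟨k, fun i => periodShift n t (p i), ⟨?_, ?_⟩, (periodShift_mem_iff hC.1 _ _).2 h0, ?_, ?_⟩
  · intro i hi
    exact (periodShift_mem_iff hW.1 _ _).2 (hp.1 i hi)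
  · intro i hi
    simpa using hp.2 i hi
  · simp only [hk]
  · rw [periodShift_of_mem hC hd h0, hm]
    ring

lemma periodShift_eq (hW : IsPartialPerm n W) (hC : IsStream n C)
    (hd : IsChannelNumbering n W C d) {b : ℤ × ℤ} (hb : b ∈ W) (t : ℤ) :
    d (periodShift n t b) = d b + t * streamDensity n C := by
  apply le_antisymm _ (le_periodShift hW hC hd hb t)
  have := le_periodShift hW hC hd ((periodShift_mem_iff hW.1 t b).2 hb) (-t)
  rw [periodShift_periodShift, add_neg_cancel, periodShift_zero] at this
  linarith

/-- Balls with the same number are equal or strictly northeast/southwest of one another. -/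
lemma trichotomy (hW : IsPartialPerm n W) (hd : IsChannelNumbering n W C d) {b b' : ℤ × ℤ}
    (hb : b ∈ W) (hb' : b' ∈ W) (h : d b = d b') :
    b = b' ∨ (b.1 < b'.1 ∧ b'.2 < b.2) ∨ (b'.1 < b.1 ∧ b.2 < b'.2) := by
  rcases lt_trichotomy b.1 b'.1 with h1 | h1 | h1
  · rcases lt_trichotomy b.2 b'.2 with h2 | h2 | h2
    · exact absurd h (lt_of_lt hd hb hb' h1 h2).ne
    · exact Or.inl (hW.2.2 _ _ hb hb' h2)
    · exact Or.inr (Or.inl ⟨h1, h2⟩)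
  · exact Or.inl (hW.2.1 _ _ hb hb' h1)
  · rcases lt_trichotomy b.2 b'.2 with h2 | h2 | h2
    · exact Or.inr (Or.inr ⟨h1, h2⟩)
    · exact Or.inl (hW.2.2 _ _ hb hb' h2)
    · exact absurd h (lt_of_lt hd hb' hb h1 h2).ne'

/-- Every ball is the end of a path from the channel along which the numbering advances by `1`,
here indexed by the numbers of its balls. -/
lemma exists_tight_path (hd : IsChannelNumbering n W C d) {b : ℤ × ℤ} (hb : b ∈ W) :
    ∃ s ≤ d b, ∃ p : ℤ → ℤ × ℤ, p s ∈ C ∧ p (d b) = b ∧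
      (∀ m, s ≤ m → m ≤ d b → p m ∈ W ∧ d (p m) = m) ∧
      ∀ m, s ≤ m → m < d b → (p m).1 < (p (m + 1)).1 ∧ (p m).2 < (p (m + 1)).2 := by
  obtain ⟨k, p, hp, h0, hk, hm⟩ := (hd.2.2 b hb).1
  have hle : ∀ j ≤ k, d (p (k - j)) + j ≤ d (p k) := by
    intro j
    induction j with
    | zero => simp
    | succ j ih =>
      intro hj
      have h := hp.2 (k - (j + 1)) (by omega)
      have := lt_of_lt hd (hp.1 _ (by omega)) (hp.1 _ (by omega)) h.1 h.2
      rw [show k - (j + 1) + 1 = k - j by omega] at this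
      have := ih (by omega)
      push_cast
      omega
  refine ⟨d (p 0), by omega, fun m => p (m - d (p 0)).toNat, by simpa using h0, ?_, ?_, ?_⟩
  · dsimp only
    rw [hm, add_sub_cancel_left, Int.toNat_natCast, hk]
  · intro m h1 h2
    have hi : (m - d (p 0)).toNat ≤ k := by omega
    refine ⟨hp.1 _ hi, ?_⟩
    have h3 := add_le_of_isPath hd hp hi
    have h4 := hle (k - (m - d (p 0)).toNat) (by omega)
    rw [show k - (k - (m - d (p 0)).toNat) = (m - d (p 0)).toNat by omega, hk] at h4
    dsimp only
    omega
  · intro m h1 h2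
    have h3 := hp.2 (m - d (p 0)).toNat (by omega)
    rwa [show (m - d (p 0)).toNat + 1 = (m + 1 - d (p 0)).toNat by omega] at h3

end IsChannelNumbering

/-- A chain `x a < ⋯ < x z` of at most `r` balls off `C`, each northeast of the ball of `C` with
the same index and fitting between the rotated balls of index `a - 1` and `z`, produces a stream of
density `r + 1` in the partial rotation. -/
lemma exists_dense_stream {n r : ℕ} {W C : Set (ℤ × ℤ)} {d : ℤ × ℤ → ℤ} {c x : ℤ → ℤ × ℤ}
    (hW : IsPartialPerm n W) (hC : IsStream n C) (hc : Enumerates n r C d c) {a z : ℤ}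
    (haz : a ≤ z) (hzr : z < a + r)
    (hxW : ∀ m, a ≤ m → m ≤ z → x m ∈ W \ C)
    (hne : ∀ m, a ≤ m → m ≤ z → (x m).1 < (c m).1 ∧ (c m).2 < (x m).2)
    (hx : ∀ m, a ≤ m → m < z → (x m).1 < (x (m + 1)).1 ∧ (x m).2 < (x (m + 1)).2)
    (hfirst : (c (a - 1)).1 < (x a).1) (hlast : (x z).2 < (c (z + 1)).2) :
    ∃ S : Set (ℤ × ℤ), IsStream n S ∧ S ⊆ partialRotation W C ∧ streamDensity n S = r + 1 := by
  set e : ℤ → ℤ × ℤ := fun m => ((c m).1, (c (m + 1)).2) with he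
  have he_shift : ∀ t m, periodShift n t (e m) = e (m + t * r) := by
    intro t m
    have h1 := congrArg Prod.fst (hc.shift t m)
    have h2 := congrArg Prod.snd (hc.shift t (m + 1))
    simp only [periodShift_fst, periodShift_snd] at h1 h2
    rw [show m + 1 + t * r = m + t * r + 1 by ring] at h2
    ext
    · exact h1
    · exact h2
  have he_mem : ∀ m, e m ∈ partialRotation W C := by
    intro m
    refine Or.inr ⟨c m, hc.mem m, c (m + 1), hc.mem _, (hc.lt _ _ (by omega)).1, ?_, rfl⟩
    intro b hb
    rw [← hc.eq_of_mem b hb]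
    rcases lt_trichotomy (d b) m with h | h | h
    · exact Or.inl (hc.lt _ _ h).1.le
    · exact Or.inl (by rw [h])
    · rcases (show m + 1 ≤ d b from h).lt_or_eq with h' | h'
      · exact Or.inr (hc.lt _ _ h').1.le
      · exact Or.inr (by rw [h'])
  have he_lt : ∀ m l, m < l → (e m).1 < (e l).1 ∧ (e m).2 < (e l).2 := fun m l h =>
    ⟨(hc.lt m l h).1, (hc.lt (m + 1) (l + 1) (by omega)).2⟩
  have hbefore : (e (a - 1)).1 < (x a).1 ∧ (e (a - 1)).2 < (x a).2 := by
    refine ⟨hfirst, ?_⟩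
    simp only [he, sub_add_cancel]
    exact (hne a le_rfl haz).2
  have hafter : (x z).1 < (e z).1 ∧ (x z).2 < (e z).2 := ⟨(hne z haz le_rfl).1, hlast⟩
  set y : ℤ → ℤ × ℤ := fun v =>
    if v ≤ 0 then e (a - 1) else if a + v - 1 ≤ z then x (a + v - 1) else e (a + v - 2) with hy
  have hstep : ∀ v : ℤ, 0 ≤ v → v + 1 < (r + 1 : ℕ) →
      (y v).1 < (y (v + 1)).1 ∧ (y v).2 < (y (v + 1)).2 := by
    intro v h0 h1
    rcases h0.eq_or_lt with rfl | h0
    · simp only [hy, le_refl, if_true, zero_add]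
      rw [if_neg (by omega), if_pos (by omega), add_sub_cancel_right]
      exact hbefore
    · simp only [hy]
      rw [if_neg (show ¬v ≤ 0 by omega), if_neg (show ¬v + 1 ≤ 0 by omega),
        show a + (v + 1) - 1 = a + v - 1 + 1 by ring,
        show a + (v + 1) - 2 = a + v - 1 by ring]
      by_cases h2 : a + v - 1 < z
      · rw [if_pos h2.le, if_pos (by omega)]
        exact hx _ (by omega) h2
      · rcases (not_lt.mp h2).eq_or_lt with h3 | h3
        · rw [if_pos h3.ge, if_neg (by omega), ← h3]
          exact hafter
        · rw [if_neg (by omega), if_neg (by omega)]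
          exact he_lt _ _ (by omega)
  have hwrap : (y ((r + 1 : ℕ) - 1)).1 < (y 0).1 + n ∧ (y ((r + 1 : ℕ) - 1)).2 < (y 0).2 + n := by
    have h0 : y 0 = e (a - 1) := by simp [hy]
    have hn : ((y 0).1 + n, (y 0).2 + n) = e (a - 1 + r) := by
      have := he_shift 1 (a - 1)
      rw [one_mul] at this
      rw [h0, ← this]
      ext <;> simp
    have h1 := congrArg Prod.fst hn
    have h2 := congrArg Prod.snd hn
    simp only at h1 h2
    rw [h1, h2]
    simp only [hy]
    push_cast
    rw [if_neg (by omega), add_sub_cancel_right]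
    by_cases h3 : a + r - 1 ≤ z
    · rw [if_pos h3]
      obtain rfl : z = a + r - 1 := by omega
      rw [show a - 1 + r = a + (r : ℤ) - 1 by ring]
      exact hafter
    · rw [if_neg h3]
      exact he_lt _ _ (by omega)
  obtain ⟨S, hS, hdens, hsub⟩ := exists_stream_of_chain (n := n) (R := r + 1) (y := y)
    (Nat.succ_pos r) hstep hwrap
  refine ⟨S, hS, ?_, hdens⟩
  intro b hb
  obtain ⟨v, t, h0, -, rfl⟩ := hsub b hb
  simp only [hy]
  split_ifs with h1 h2
  · rw [he_shift]
    exact he_mem _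
  · have := hxW (a + v - 1) (by omega) h2
    exact Or.inl ⟨(periodShift_mem_iff hW.1 _ _).2 this.1,
      fun h => this.2 ((periodShift_mem_iff hC.1 _ _).1 h)⟩
  · rw [he_shift]
    exact he_mem _

lemma streamDensity_pos {n : ℕ} (hn : 0 < n) {S : Set (ℤ × ℤ)} (hS : IsStream n S) {b : ℤ × ℤ}
    (hb : b ∈ S) : 0 < streamDensity n S := by
  have hn' : (0 : ℤ) < n := by exact_mod_cast hn
  have hfin : {x : ℤ | 1 ≤ x ∧ x ≤ n ∧ ∃ y : ℤ, (x, y) ∈ S}.Finite :=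
    (Set.finite_Icc (1 : ℤ) n).subset fun x hx => ⟨hx.1, hx.2.1⟩
  refine (Set.ncard_pos hfin).2
    ⟨(periodShift n (-((b.1 - 1) / n)) b).1, ?_, ?_, _, (periodShift_mem_iff hS.1 _ _).2 hb⟩
  · have h1 := Int.emod_nonneg (b.1 - 1) hn'.ne'
    have h2 := Int.emod_add_mul_ediv (b.1 - 1) n
    rw [periodShift_fst]
    linarith
  · have h1 := Int.emod_lt_of_pos (b.1 - 1) hn'
    have h2 := Int.emod_add_mul_ediv (b.1 - 1) n
    rw [periodShift_fst]
    linarith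

namespace IsChannelNumbering

variable {n r : ℕ} {W C C' : Set (ℤ × ℤ)} {d d' : ℤ × ℤ → ℤ} {c c' : ℤ → ℤ × ℤ}

lemma le_of_eqOn (hd : IsChannelNumbering n W C d) (hd' : IsChannelNumbering n W C' d')
    (h : ∀ b ∈ C', d' b = d b) {b : ℤ × ℤ} (hb : b ∈ W) : d' b ≤ d b := by
  obtain ⟨k, p, hp, h0, hk, hm⟩ := (hd'.2.2 b hb).1
  have := add_le_of_isPath hd hp le_rfl
  rw [hm, h _ h0, ← hk]
  exact this

/-- Two channel numberings that agree on one channel and at one ball of the other agree. -/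
lemma eq_of_eqOn (hW : IsPartialPerm n W) (hC : IsStream n C) (hC' : IsStream n C')
    (hCW : C ⊆ W) (hd : IsChannelNumbering n W C d) (hd' : IsChannelNumbering n W C' d')
    (hr : 0 < streamDensity n C) (hdens : streamDensity n C' = streamDensity n C)
    (hagree : ∃ b ∈ C, d' b = d b) (h : ∀ b ∈ C', d' b = d b) {b : ℤ × ℤ} (hb : b ∈ W) :
    d' b = d b := by
  apply le_antisymm (le_of_eqOn hd hd' h hb)
  refine le_of_eqOn hd' hd (fun b hb => ?_) hb
  apply le_antisymm _ (le_of_eqOn hd hd' h (hCW hb))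
  obtain ⟨c, hc⟩ := exists_enumerates hC hd hr
  obtain ⟨b₀, hb₀, h₀⟩ := hagree
  set r := streamDensity n C
  have hr' : (0 : ℤ) < r := by exact_mod_cast hr
  set t := (d b - d b₀) / r
  have ht : d b₀ + t * r ≤ d b := by
    have h1 := Int.emod_nonneg (d b - d b₀) hr'.ne'
    have h2 := Int.emod_add_mul_ediv (d b - d b₀) r
    linarith
  have hbase : d' (c (d b₀ + t * r)) = d b₀ + t * r := by
    rw [← hc.shift, hc.eq_of_mem _ hb₀, periodShift_eq hW hC' hd' (hCW hb₀), hdens, h₀]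
  have hgrow : ∀ k : ℕ, d b₀ + t * r + k ≤ d' (c (d b₀ + t * r + k)) := by
    intro k
    induction k with
    | zero => simpa using hbase.ge
    | succ k ih =>
      have h1 := hc.lt (d b₀ + t * r + k) (d b₀ + t * r + (k + 1 : ℕ)) (by push_cast; omega)
      have h2 := lt_of_lt hd' (hCW (hc.mem _)) (hCW (hc.mem _)) h1.1 h1.2
      push_cast at h2 ⊢
      omega
  have hfinal := hgrow (d b - (d b₀ + t * r)).toNat
  rw [Int.toNat_of_nonneg (by omega), add_sub_cancel, hc.eq_of_mem b hb] at hfinal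
  exact hfinal

lemma congr (hCW : C ⊆ W) (hW : IsPartialPerm n W) (hd' : IsChannelNumbering n W C d')
    (h : ∀ b ∈ W, d' b = d b) : IsChannelNumbering n W C d := by
  refine ⟨?_, ?_, ?_⟩
  · intro b b' hb hb' hlt
    rw [← h b (hCW hb), ← h b' (hCW hb')]
    exact hd'.1 b b' hb hb' hlt
  · intro b hb
    rw [← h b (hCW hb), ← h _ ((hW.1 b).1 (hCW hb))]
    exact hd'.2.1 b hb
  · intro b hb
    rw [← h b hb]
    convert hd'.2.2 b hb using 1
    ext m
    constructor
    · rintro ⟨k, p, hp, h0, hk, hm⟩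
      exact ⟨k, p, hp, h0, hk, by rw [hm, h _ (hCW h0)]⟩
    · rintro ⟨k, p, hp, h0, hk, hm⟩
      exact ⟨k, p, hp, h0, hk, by rw [hm, h _ (hCW h0)]⟩

/-- If `C'` lies strictly northeast of `C`, there is an infinite tight chain strictly northeast of
`C` whose first ball is south of the preceding ball of `C`. -/
lemma exists_chain_from (hW : IsPartialPerm n W) (hCW : C ⊆ W) (hCW' : C' ⊆ W)
    (hd : IsChannelNumbering n W C d) (hc : Enumerates n r C d c) (hc' : Enumerates n r C' d c')
    (hne : ∀ m, (c' m).1 < (c m).1 ∧ (c m).2 < (c' m).2) :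
    ∃ (a : ℤ) (p : ℤ → ℤ × ℤ), (c (a - 1)).1 < (p a).1 ∧ ∀ m, a ≤ m →
      p m ∈ W ∧ d (p m) = m ∧ ((p m).1 < (c m).1 ∧ (c m).2 < (p m).2) ∧
      (p m).1 < (p (m + 1)).1 ∧ (p m).2 < (p (m + 1)).2 := by
  obtain ⟨s, hs, p, hpC, hp0, hpW, hlt⟩ := exists_tight_path hd (hCW' (hc'.mem 0))
  rw [hc'.level] at hs hp0 hpW hlt
  have hstart : p s = c s := by
    have := hc.eq_of_mem _ hpC
    rw [(hpW s le_rfl hs).2] at this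
    exact this.symm
  obtain ⟨j, ⟨hsj, hj0, hj⟩, hmax⟩ := Int.exists_greatest_of_bdd
    (P := fun j => s ≤ j ∧ j ≤ 0 ∧ (c j).1 ≤ (p j).1) ⟨0, fun _ h => h.2.1⟩
    ⟨s, le_rfl, hs, by rw [hstart]⟩
  have hj0' : j < 0 := by
    refine lt_of_le_of_ne hj0 fun h => ?_
    rw [h, hp0] at hj
    exact absurd (hne 0).1 (not_lt.mpr hj)
  refine ⟨j + 1, fun m => if m ≤ 0 then p m else c' m, ?_, ?_⟩
  · dsimp only
    rw [if_pos (by omega), add_sub_cancel_right]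
    exact hj.trans_lt (hlt j hsj hj0').1
  · intro m hm
    dsimp only
    by_cases h0 : m ≤ 0
    · obtain ⟨h1, h2⟩ := hpW m (by omega) h0
      rw [if_pos h0]
      refine ⟨h1, h2, ?_, ?_⟩
      · have hnot : (p m).1 < (c m).1 := by
          by_contra hge
          have := hmax m ⟨by omega, h0, not_lt.mp hge⟩
          omega
        rcases trichotomy hW hd h1 (hCW (hc.mem m)) (by rw [h2, hc.level]) with h | h | h
        · rw [h] at hnot
          exact absurd hnot (lt_irrefl _)
        · exact h
        · omega
      · rcases h0.lt_or_eq with h | rfl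
        · rw [if_pos (by omega)]
          exact hlt m (by omega) h
        · rw [if_neg (by omega), hp0]
          exact hc'.lt _ _ (by omega)
    · rw [if_neg h0, if_neg (by omega)]
      exact ⟨hCW' (hc'.mem m), hc'.level m, hne m, hc'.lt _ _ (by omega)⟩

/-- If `C'` lies strictly northeast of `C`, there is a tight chain, infinite to the northwest and
strictly northeast of `C`, whose last ball is west of the following ball of `C`. -/
lemma exists_chain_to (hW : IsPartialPerm n W) (hCW : C ⊆ W) (hCW' : C' ⊆ W)
    (hd' : IsChannelNumbering n W C' d) (hc : Enumerates n r C d c) (hc' : Enumerates n r C' d c')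
    (hne : ∀ m, (c' m).1 < (c m).1 ∧ (c m).2 < (c' m).2) :
    ∃ (z : ℤ) (q : ℤ → ℤ × ℤ), (q z).2 < (c (z + 1)).2 ∧ (∀ m, m ≤ z →
      q m ∈ W ∧ d (q m) = m ∧ ((q m).1 < (c m).1 ∧ (c m).2 < (q m).2)) ∧
      ∀ m, m < z → (q m).1 < (q (m + 1)).1 ∧ (q m).2 < (q (m + 1)).2 := by
  obtain ⟨s, hs, q, hqC, hq0, hqW, hlt⟩ := exists_tight_path hd' (hCW (hc.mem 0))
  rw [hc.level] at hs hq0 hqW hlt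
  have hstart : q s = c' s := by
    have := hc'.eq_of_mem _ hqC
    rw [(hqW s le_rfl hs).2] at this
    exact this.symm
  obtain ⟨k, ⟨hsk, hk0, hk⟩, hmin⟩ := Int.exists_least_of_bdd
    (P := fun k => s ≤ k ∧ k ≤ 0 ∧ (c k).1 ≤ (q k).1) ⟨s, fun _ h => h.1⟩
    ⟨0, hs, le_rfl, by rw [hq0]⟩
  have hsk' : s < k := by
    refine lt_of_le_of_ne hsk fun h => ?_
    rw [← h, hstart] at hk
    exact absurd (hne s).1 (not_lt.mpr hk)
  have hk2 : (q k).2 ≤ (c k).2 := by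
    obtain ⟨h1, h2⟩ := hqW k hsk hk0
    rcases trichotomy hW hd' h1 (hCW (hc.mem k)) (by rw [h2, hc.level]) with h | h | h
    · rw [h]
    · omega
    · exact h.2.le
  refine ⟨k - 1, fun m => if s ≤ m then q m else c' m, ?_, ?_, ?_⟩
  · dsimp only
    rw [if_pos (by omega), sub_add_cancel]
    have := (hlt (k - 1) (by omega) (by omega)).2
    rw [sub_add_cancel] at this
    exact this.trans_le hk2
  · intro m hm
    dsimp only
    by_cases h0 : s ≤ m
    · obtain ⟨h1, h2⟩ := hqW m h0 (by omega)
      rw [if_pos h0]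
      refine ⟨h1, h2, ?_⟩
      have hnot : (q m).1 < (c m).1 := by
        by_contra hge
        have := hmin m ⟨h0, by omega, not_lt.mp hge⟩
        omega
      rcases trichotomy hW hd' h1 (hCW (hc.mem m)) (by rw [h2, hc.level]) with h | h | h
      · rw [h] at hnot
        exact absurd hnot (lt_irrefl _)
      · exact h
      · omega
    · rw [if_neg h0]
      exact ⟨hCW' (hc'.mem m), hc'.level m, hne m⟩
  · intro m hm
    dsimp only
    by_cases h0 : s ≤ m
    · rw [if_pos h0, if_pos (by omega)]
      exact hlt m h0 (by omega)
    · rw [if_neg h0]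
      rcases (show m + 1 ≤ s by omega).lt_or_eq with h | h
      · rw [if_neg (by omega)]
        exact hc'.lt _ _ (by omega)
      · rw [if_pos h.ge, h, hstart]
        exact hc'.lt _ _ (by omega)

end IsChannelNumbering

lemma Enumerates.not_mem {n r : ℕ} {C : Set (ℤ × ℤ)} {d : ℤ × ℤ → ℤ} {c : ℤ → ℤ × ℤ}
    (hc : Enumerates n r C d c) {b : ℤ × ℤ} {m : ℤ} (hb : d b = m) (hlt : b.1 < (c m).1) :
    b ∉ C := by
  intro h
  have := hc.eq_of_mem b h
  rw [hb] at this
  rw [this] at hlt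
  exact lt_irrefl _ hlt

section DenseStream

variable {n : ℕ} {W C C' : Set (ℤ × ℤ)} {d : ℤ × ℤ → ℤ} {c c' : ℤ → ℤ × ℤ}

open IsChannelNumbering

/-- The case where `C'` is everywhere strictly northeast of `C`. -/
lemma exists_dense_stream_of_forall_lt (hW : IsPartialPerm n W) (hC : IsStream n C) (hCW : C ⊆ W)
    (hCW' : C' ⊆ W) (hr : 0 < streamDensity n C)
    (hd : IsChannelNumbering n W C d) (hd' : IsChannelNumbering n W C' d)
    (hc : Enumerates n (streamDensity n C) C d c) (hc' : Enumerates n (streamDensity n C) C' d c')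
    (hne : ∀ m, (c' m).1 < (c m).1 ∧ (c m).2 < (c' m).2) :
    ∃ S : Set (ℤ × ℤ), IsStream n S ∧ S ⊆ partialRotation W C ∧
      streamDensity n S = streamDensity n C + 1 := by
  obtain ⟨a₀, p₀, hfirst₀, hp₀⟩ := exists_chain_from hW hCW hCW' hd hc hc' hne
  obtain ⟨z, q, hlast, hq, hqlt⟩ := exists_chain_to hW hCW hCW' hd' hc hc' hne
  set r := streamDensity n C with hrdef
  have hr' : (0 : ℤ) < r := by exact_mod_cast hr
  set t := (z - a₀) / r with ht
  have hmod0 := Int.emod_nonneg (z - a₀) hr'.ne'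
  have hmod1 := Int.emod_lt_of_pos (z - a₀) hr'
  have hmod := Int.emod_add_mul_ediv (z - a₀) r
  rw [← ht, mul_comm] at hmod
  set a := a₀ + t * r with ha
  set p : ℤ → ℤ × ℤ := fun m => periodShift n t (p₀ (m - t * r)) with hpdef
  have hcs : ∀ m, c m = periodShift n t (c (m - t * r)) := by
    intro m
    rw [hc.shift, sub_add_cancel]
  have hp : ∀ m, a ≤ m → p m ∈ W ∧ d (p m) = m ∧ ((p m).1 < (c m).1 ∧ (c m).2 < (p m).2) ∧
      (p m).1 < (p (m + 1)).1 ∧ (p m).2 < (p (m + 1)).2 := by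
    intro m hm
    obtain ⟨h1, h2, h3, h4⟩ := hp₀ (m - t * r) (by omega)
    refine ⟨(periodShift_mem_iff hW.1 _ _).2 h1, ?_, ?_, ?_⟩
    · rw [periodShift_eq hW hC hd h1, h2, ← hrdef, sub_add_cancel]
    · rw [hcs m]
      simpa [hpdef] using h3
    · simp only [hpdef, periodShift_fst, periodShift_snd,
        show m + 1 - t * r = m - t * r + 1 by ring]
      simpa using h4
  have hfirst : (c (a - 1)).1 < (p a).1 := by
    rw [hcs]
    simp only [hpdef, periodShift_fst, ha, add_sub_cancel_right,
      show a₀ + t * r - 1 - t * r = a₀ - 1 by ring]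
    linarith
  set x : ℤ → ℤ × ℤ := fun m => (max (p m).1 (q m).1, min (p m).2 (q m).2) with hxdef
  have hmeet : ∀ m, a ≤ m → m ≤ z → x m = p m ∨ x m = q m := by
    intro m h1 h2
    obtain ⟨hpW, hpd, -, -⟩ := hp m h1
    obtain ⟨hqW, hqd, -⟩ := hq m h2
    rcases trichotomy hW hd hpW hqW (by rw [hpd, hqd]) with h | h | h
    · left
      simp [hxdef, h]
    · right
      simp [hxdef, h.1.le, h.2.le]
    · left
      simp [hxdef, h.1.le, h.2.le]
  refine exists_dense_stream (x := x) hW hC hc (a := a) (z := z) (by omega) (by omega)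
    ?_ ?_ ?_ ?_ ?_
  · intro m h1 h2
    obtain ⟨hpW, hpd, hpne, -⟩ := hp m h1
    obtain ⟨hqW, hqd, hqne⟩ := hq m h2
    rcases hmeet m h1 h2 with h | h <;> rw [h]
    · exact ⟨hpW, hc.not_mem hpd hpne.1⟩
    · exact ⟨hqW, hc.not_mem hqd hqne.1⟩
  · intro m h1 h2
    have h3 := (hp m h1).2.2.1
    have h4 := (hq m h2).2.2
    exact ⟨max_lt h3.1 h4.1, lt_min h3.2 h4.2⟩
  · intro m h1 h2
    have h3 := (hp m h1).2.2.2
    have h4 := hqlt m h2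
    exact ⟨max_lt_max h3.1 h4.1, min_lt_min h3.2 h4.2⟩
  · exact hfirst.trans_le (le_max_left _ _)
  · exact (min_le_right _ _).trans_lt hlast

/-- The case where `C'` meets `C`. -/
lemma exists_dense_stream_of_exists_eq (hW : IsPartialPerm n W) (hC : IsStream n C)
    (hCW' : C' ⊆ W) (hr : 0 < streamDensity n C)
    (hc : Enumerates n (streamDensity n C) C d c) (hc' : Enumerates n (streamDensity n C) C' d c')
    (hne : ∀ m, c' m = c m ∨ ((c' m).1 < (c m).1 ∧ (c m).2 < (c' m).2))
    {i m₀ : ℤ} (hi : c' i ≠ c i) (hm₀ : c' m₀ = c m₀) :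
    ∃ S : Set (ℤ × ℤ), IsStream n S ∧ S ⊆ partialRotation W C ∧
      streamDensity n S = streamDensity n C + 1 := by
  set r := streamDensity n C
  have hr' : (0 : ℤ) < r := by exact_mod_cast hr
  have hper : ∀ t m, c' m = c m → c' (m + t * r) = c (m + t * r) := by
    intro t m h
    rw [← hc.shift, ← hc'.shift, h]
  obtain ⟨j, ⟨hji, hj⟩, hmax⟩ := Int.exists_greatest_of_bdd
    (P := fun j => j ≤ i ∧ c' j = c j) ⟨i, fun _ h => h.1⟩
    ⟨m₀ + (i - m₀) / r * r, by
      have h1 := Int.emod_nonneg (i - m₀) hr'.ne'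
      have h2 := Int.emod_add_mul_ediv (i - m₀) r
      linarith, hper _ _ hm₀⟩
  have hjr : c' (j + r) = c (j + r) := by
    have := hper 1 j hj
    rwa [one_mul] at this
  have hji' : j < i := lt_of_le_of_ne hji fun h => hi (h ▸ hj)
  have hjr_lt : i < j + r := by
    by_contra hle
    have := hmax (j + r) ⟨not_lt.mp hle, hjr⟩
    omega
  obtain ⟨k, ⟨hki, hk⟩, hmin⟩ := Int.exists_least_of_bdd
    (P := fun k => i ≤ k ∧ c' k = c k) ⟨i, fun _ h => h.1⟩ ⟨j + r, hjr_lt.le, hjr⟩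
  have hki' : i < k := lt_of_le_of_ne hki fun h => hi (h ▸ hk)
  have hkr := hmin (j + r) ⟨hjr_lt.le, hjr⟩
  have hstrict : ∀ m, j + 1 ≤ m → m ≤ k - 1 → (c' m).1 < (c m).1 ∧ (c m).2 < (c' m).2 := by
    intro m h1 h2
    refine (hne m).resolve_left fun h => ?_
    rcases le_total m i with h3 | h3
    · have := hmax m ⟨h3, h⟩
      omega
    · have := hmin m ⟨h3, h⟩
      omega
  refine exists_dense_stream (x := c') hW hC hc (a := j + 1) (z := k - 1) (by omega) (by omega)
    ?_ hstrict ?_ ?_ ?_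
  · intro m h1 h2
    exact ⟨hCW' (hc'.mem m), hc.not_mem (hc'.level m) (hstrict m h1 h2).1⟩
  · intro m _ _
    exact hc'.lt _ _ (by omega)
  · rw [add_sub_cancel_right, ← hj]
    exact (hc'.lt _ _ (by omega)).1
  · rw [sub_add_cancel, ← hk]
    exact (hc'.lt _ _ (by omega)).2

/-- If `C ≤_SW C'`, then balls of `C'` are weakly northeast of the balls of `C` with the same
number. -/
lemma eq_or_northeast_of_SWle (hW : IsPartialPerm n W) (hCW : C ⊆ W) (hCW' : C' ⊆ W) {r : ℕ}
    (hd : IsChannelNumbering n W C d) (hc : Enumerates n r C d c) (hc' : Enumerates n r C' d c')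
    (hsw : SWle C C') (m : ℤ) :
    c' m = c m ∨ ((c' m).1 < (c m).1 ∧ (c m).2 < (c' m).2) := by
  rcases trichotomy hW hd (hCW' (hc'.mem m)) (hCW (hc.mem m)) (by rw [hc.level, hc'.level])
    with h | h | h
  · exact Or.inl h
  · exact Or.inr h
  · exfalso
    obtain ⟨b, hb, h1, h2⟩ := hsw _ (hc.mem m)
    rw [← hc'.eq_of_mem b hb] at h1 h2
    rcases lt_trichotomy (d b) m with h3 | h3 | h3
    · have := hc'.lt _ _ h3
      omega
    · rw [h3] at h1
      omega
    · have := hc'.lt _ _ h3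
      omega

end DenseStream

/-- If `C` is a channel of `W` that is not the northeast channel of its river
(witnessed by a different channel `C'` northeast of `C` at distance `0`, i.e.
whose normalized channel numberings agree on `C'`), then the partial rotation
`pr_C W` contains a stream of density strictly greater than that of `C`.
Consequently the maximal stream density (the first part of the Greene–Kleitman
partition) strictly increases, so `pr_C W` is not in the same two-sided cell
as `W`. -/
theorem stmt19 (n : ℕ) (hn : 0 < n) (W C C' : Set (ℤ × ℤ))
    (hW : IsPartialPerm n W)
    (hC : IsChannel n W C) (hC' : IsChannel n W C')
    (hne : C' ≠ C) (hsw : SWle C C')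
    (d d' : ℤ × ℤ → ℤ)
    (hd : IsChannelNumbering n W C d) (hd' : IsChannelNumbering n W C' d')
    (hagree : ∃ b ∈ C, d' b = d b)
    (hdist0 : ∀ b ∈ C', d' b = d b) :
    (∃ S : Set (ℤ × ℤ), IsStream n S ∧ S ⊆ partialRotation W C ∧
      streamDensity n C < streamDensity n S) ∧
    (∀ r r' : ℕ,
      IsGreatest {k : ℕ | ∃ S : Set (ℤ × ℤ),
        IsStream n S ∧ S ⊆ W ∧ streamDensity n S = k} r →
      IsGreatest {k : ℕ | ∃ S : Set (ℤ × ℤ),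
        IsStream n S ∧ S ⊆ partialRotation W C ∧ streamDensity n S = k} r' →
      r < r') := by
  have hdense : ∃ S : Set (ℤ × ℤ), IsStream n S ∧ S ⊆ partialRotation W C ∧
      streamDensity n C < streamDensity n S := by
    have hdens : streamDensity n C' = streamDensity n C :=
      le_antisymm (hC.2.2 C' hC'.1 hC'.2.1) (hC'.2.2 C hC.1 hC.2.1)
    have hr : 0 < streamDensity n C := by
      obtain ⟨b, hb, -⟩ := hagree
      exact streamDensity_pos hn hC.1 hb
    have hd'' : IsChannelNumbering n W C' d := hd'.congr hC'.2.1 hW fun b hb =>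
      IsChannelNumbering.eq_of_eqOn hW hC.1 hC'.1 hC.2.1 hd hd' hr hdens hagree hdist0 hb
    obtain ⟨c, hc⟩ := IsChannelNumbering.exists_enumerates hC.1 hd hr
    obtain ⟨c', hc'⟩ := IsChannelNumbering.exists_enumerates hC'.1 hd'' (hdens ▸ hr)
    rw [hdens] at hc'
    have hNE := eq_or_northeast_of_SWle hW hC.2.1 hC'.2.1 hd hc hc' hsw
    obtain ⟨S, hS, hsub, hcard⟩ : ∃ S : Set (ℤ × ℤ), IsStream n S ∧ S ⊆ partialRotation W C ∧
        streamDensity n S = streamDensity n C + 1 := by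
      by_cases hmeet : ∃ m, c' m = c m
      · obtain ⟨m₀, hm₀⟩ := hmeet
        have hdiff : ∃ i, c' i ≠ c i := by
          by_contra! hall
          apply hne
          ext b
          constructor
          · intro hb
            rw [← hc'.eq_of_mem b hb, hall]
            exact hc.mem _
          · intro hb
            rw [← hc.eq_of_mem b hb, ← hall]
            exact hc'.mem _
        obtain ⟨i, hi⟩ := hdiff
        exact exists_dense_stream_of_exists_eq hW hC.1 hC'.2.1 hr hc hc' hNE hi hm₀
      · exact exists_dense_stream_of_forall_lt hW hC.1 hC.2.1 hC'.2.1 hr hd hd'' hc hc'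
          fun m => (hNE m).resolve_left fun h => hmeet ⟨m, h⟩
    exact ⟨S, hS, hsub, by omega⟩
  refine ⟨hdense, ?_⟩
  rintro r r' ⟨⟨T, hT, hTW, rfl⟩, -⟩ ⟨-, hub⟩
  obtain ⟨S, hS, hsub, hlt⟩ := hdense
  exact (hC.2.2 T hT hTW).trans_lt (hlt.trans_le (hub ⟨S, hS, hsub, rfl⟩))
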